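/- Let m : V × V → ℕ be the edge-multiplicity function of a loopless multigraph on a vertex set V with exactly 4 elements, i.e. m(i,j) = m(j,i) for all i, j and m(i,i) = 0 for all i. Assume that every vertex has degree 3 (Σ_j m(i,j) = 3 for each i) and that the graph is connected (the simple graph in which i is adjacent to j if and only if i ≠ j and m(i,j) ≥ 1 is connected). Then either m(i,j) = 1 for all i ≠ j (the multigraph is the complete graph K₄), or the vertices can be labelled a, b, c, d so that m(a,b) = m(c,d) = 2, m(a,c) = m(b,d) = 1, and m(a,d) = m(b,c) = 0. -/

import Mathlib

/-!
If no two vertices are joined by a multiple edge, then each vertex, having degree 3, is joined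
exactly once to each of the three others. Otherwise some `m a b` is at least 2, and it is not 3,
since a triple edge would be a connected component. So `m a b = 2` and `a` has exactly one more
neighbour `c`. The remaining multiplicities follow because, in a regular multigraph on four
vertices, opposite edges of the tetrahedron have the same multiplicity: compare the sum of the
degrees of the ends of one edge with the sum of the degrees of the other two vertices.
-/

section Degrees

variable {V : Type*} [Fintype V] {m : V → V → ℕ}

theorem pair_eq_univ_of_connected_of_saturated_edge [DecidableEq V] {a b : V}
    (hsymm : ∀ i j, m i j = m j i)
    (hconn : (SimpleGraph.fromRel (fun i j => 1 ≤ m i j)).Preconnected)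
    (ha : ∑ j, m a j = m a b) (hb : ∑ j, m b j = m b a) :
    ({a, b} : Finset V) = Finset.univ := by
  have eq_of_saturated {u v w : V} (hu : ∑ j, m u j = m u v) (huw : 1 ≤ m u w) : w = v := by
    by_contra hwv
    exact (Finset.single_lt_sum hwv (Finset.mem_univ v) (Finset.mem_univ w) huw
      fun _ _ _ => Nat.zero_le _).ne' hu
  rw [Finset.eq_univ_iff_forall]
  by_contra! ⟨x, hx⟩
  obtain ⟨walk⟩ := hconn a x
  obtain ⟨⟨⟨u, v⟩, huv⟩, -, hu, hv⟩ :=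
    walk.exists_boundary_dart (({a, b} : Finset V) : Set V) (by simp) hx
  have hmuv : 1 ≤ m u v := by
    rcases (SimpleGraph.fromRel_adj _ _ _).mp huv with ⟨-, h | h⟩
    · exact h
    · rwa [hsymm]
  simp only [Finset.coe_insert, Finset.coe_singleton, Set.mem_insert_iff,
    Set.mem_singleton_iff] at hu hv
  rcases hu with rfl | rfl
  · exact hv (.inr (eq_of_saturated ha hmuv))
  · exact hv (.inl (eq_of_saturated hb hmuv))

theorem eq_one_of_le_one_of_degree_add_one_eq_card {i j : V} (hloop : m i i = 0)
    (hle : ∀ k, m i k ≤ 1) (hdeg : ∑ k, m i k + 1 = Fintype.card V) (hij : i ≠ j) :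
    m i j = 1 := by
  classical
  have hsum : ∑ k ∈ Finset.univ.erase i, m i k = ∑ _k ∈ Finset.univ.erase i, 1 := by
    rw [Finset.sum_erase _ hloop, Finset.sum_const, Finset.card_erase_of_mem (Finset.mem_univ i),
      Finset.card_univ, ← hdeg, smul_eq_mul, mul_one, Nat.add_sub_cancel]
  exact (Finset.sum_eq_sum_iff_of_le fun k _ => hle k).mp hsum j
    (Finset.mem_erase.mpr ⟨hij.symm, Finset.mem_univ j⟩)

end Degrees

section FourVertices

variable {V : Type*} [Fintype V] [DecidableEq V]

theorem exists_insert_insert_pair_eq_univ (hV : Fintype.card V = 4) {a b : V} (hab : a ≠ b) :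
    ∃ c d : V, ({a, b, c, d} : Finset V) = Finset.univ := by
  have hcard : (({a, b} : Finset V)ᶜ).card = 2 := by
    rw [Finset.card_compl, hV, Finset.card_pair hab]
  obtain ⟨c, d, -, hcd⟩ := Finset.card_eq_two.mp hcard
  refine ⟨c, d, ?_⟩
  rw [← Finset.union_compl {a, b}, hcd]
  simp only [Finset.insert_union, Finset.singleton_union]

variable {R : Type*} {a b c d : V}

theorem sum_univ_eq_of_insert_eq_univ [AddCommMonoid R] (hV : Fintype.card V = 4)
    (huniv : ({a, b, c, d} : Finset V) = Finset.univ) (f : V → R) :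
    ∑ i, f i = f a + f b + f c + f d := by
  have hlist : [a, b, c, d].toFinset = Finset.univ := by
    simpa only [List.toFinset_cons, List.toFinset_nil, insert_empty_eq] using huniv
  have hnodup : [a, b, c, d].Nodup := by
    rw [← Multiset.coe_nodup, ← Multiset.toFinset_card_eq_card_iff_nodup]
    simpa [hV] using congrArg Finset.card hlist
  rw [← hlist, List.sum_toFinset f hnodup]
  simp [add_assoc]

theorem opposite_weights_eq_of_regular [AddCancelCommMonoid R] [IsAddTorsionFree R]
    (hV : Fintype.card V = 4) (huniv : ({a, b, c, d} : Finset V) = Finset.univ)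
    {w : V → V → R} {k : R} (hsymm : ∀ i j, w i j = w j i) (hloop : ∀ i, w i i = 0)
    (hdeg : ∀ i, ∑ j, w i j = k) :
    w a b = w c d := by
  have hsum (i : V) : w i a + w i b + w i c + w i d = k :=
    (sum_univ_eq_of_insert_eq_univ hV huniv (w i)).symm.trans (hdeg i)
  apply nsmul_right_injective two_ne_zero
  apply add_right_cancel (b := w a c + w a d + w b c + w b d)
  have ha := hsum a
  have hb := hsum b
  have hc := hsum c
  have hd := hsum d
  rw [hloop] at ha hb hc hd
  rw [hsymm b a] at hb
  rw [hsymm c a, hsymm c b] at hc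
  rw [hsymm d a, hsymm d b, hsymm d c] at hd
  calc 2 • w a b + (w a c + w a d + w b c + w b d)
      = (0 + w a b + w a c + w a d) + (w a b + 0 + w b c + w b d) := by abel
    _ = (w a c + w b c + 0 + w c d) + (w a d + w b d + w c d + 0) := by rw [ha, hb, hc, hd]
    _ = 2 • w c d + (w a c + w a d + w b c + w b d) := by abel

theorem exists_labelling_of_double_edge (hV : Fintype.card V = 4) {m : V → V → ℕ}
    (hsymm : ∀ i j, m i j = m j i) (hloop : ∀ i, m i i = 0) (hdeg : ∀ i, ∑ j, m i j = 3)
    (hab : m a b = 2) :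
    ∃ c d : V, ({a, b, c, d} : Finset V) = Finset.univ ∧
      m c d = 2 ∧ m a c = 1 ∧ m b d = 1 ∧ m a d = 0 ∧ m b c = 0 := by
  have hne : a ≠ b := by
    rintro rfl
    simp [hloop] at hab
  obtain ⟨c, d, huniv⟩ := exists_insert_insert_pair_eq_univ hV hne
  have hdeg_a : m a c + m a d = 1 := by
    have h := (sum_univ_eq_of_insert_eq_univ hV huniv (m a)).symm.trans (hdeg a)
    rw [hloop, hab] at h
    lia
  wlog hac : m a c = 1 generalizing c d
  · exact this d c (by rwa [Finset.pair_comm d c]) (by lia) (by lia)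
  have had : m a d = 0 := by lia
  have habcd : m a b = m c d := opposite_weights_eq_of_regular hV huniv hsymm hloop hdeg
  have hacbd : m a c = m b d :=
    opposite_weights_eq_of_regular hV (by rwa [Finset.insert_comm c b]) hsymm hloop hdeg
  have hadbc : m a d = m b c :=
    opposite_weights_eq_of_regular hV
      (by rwa [Finset.insert_comm d b, Finset.pair_comm d c]) hsymm hloop hdeg
  exact ⟨c, d, huniv, habcd ▸ hab, hac, hacbd ▸ hac, had, hadbc ▸ had⟩

end FourVertices

/-- Classification of connected loopless multigraphs on 4 vertices in which every
vertex has degree 3: either it is the complete graph `K₄` (all multiplicities between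
distinct vertices equal to 1), or the vertices can be labelled `a, b, c, d` so that
`m a b = m c d = 2`, `m a c = m b d = 1` and `m a d = m b c = 0`. -/
theorem multigraph_four_vertices_degree_three_classification
    {V : Type*} [Fintype V] [DecidableEq V] (hV : Fintype.card V = 4)
    (m : V → V → ℕ)
    (hsymm : ∀ i j, m i j = m j i)
    (hloop : ∀ i, m i i = 0)
    (hdeg : ∀ i, ∑ j, m i j = 3)
    (hconn : (SimpleGraph.fromRel (fun i j => 1 ≤ m i j)).Connected) :
    (∀ i j, i ≠ j → m i j = 1) ∨
    ∃ a b c d : V, ({a, b, c, d} : Finset V) = Finset.univ ∧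
      m a b = 2 ∧ m c d = 2 ∧ m a c = 1 ∧ m b d = 1 ∧ m a d = 0 ∧ m b c = 0 := by
  by_cases hsimple : ∀ i j, m i j ≤ 1
  · left
    intro i j hij
    exact eq_one_of_le_one_of_degree_add_one_eq_card (hloop i) (hsimple i) (by rw [hdeg, hV]) hij
  right
  push Not at hsimple
  obtain ⟨a, b, hab⟩ := hsimple
  have hab_le : m a b ≤ 3 := hdeg a ▸ Finset.single_le_sum_of_canonicallyOrdered (Finset.mem_univ b)
  have hab_ne : m a b ≠ 3 := by
    intro h
    have huniv := pair_eq_univ_of_connected_of_saturated_edge hsymm hconn.preconnected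
      ((hdeg a).trans h.symm) ((hdeg b).trans (hsymm a b ▸ h).symm)
    have hcard : Fintype.card V ≤ 2 := by
      rw [← Finset.card_univ, ← huniv]
      exact Finset.card_le_two
    lia
  have hab_eq : m a b = 2 := by lia
  obtain ⟨c, d, huniv, hcd⟩ := exists_labelling_of_double_edge hV hsymm hloop hdeg hab_eq
  exact ⟨a, b, c, d, huniv, hab_eq, hcd⟩
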